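/- Let m, p ≥ 1, let F ∈ M_m(ℂ) be positive semidefinite Hermitian, let G ∈ M_p(ℂ) be positive semidefinite Hermitian, let P ∈ M_m(ℂ) ⊗ M_p(ℂ) ≅ M_{mp}(ℂ) be an orthogonal projection (P = P^* = P²), let B ∈ M_{mp}(ℂ) be arbitrary, and let e ∈ M_m(ℂ) have rank at most one. Then |Tr( (F ⊗ G) · P B P · (e ⊗ I_p) )| ≤ Tr(G) · ‖B‖ · ‖eF‖, where ⊗ is the Kronecker product and ‖·‖ the operator norm. (This is the matrix content of Lemma 7.6 of the paper, where F ⊗ G = F_n ⊗ F_{t-n}, P = P_t^+, and the conclusion reads |qtr_t(B ψ_{n,t}(e))| ≤ (dim_q(t-n)/dim_q(t)) ‖B‖ ‖eF_n‖.) -/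

import Mathlib

open scoped ComplexOrder

open Kronecker

/-- The operator norm of a complex matrix acting on `ℓ²`. -/
noncomputable def matOpNorm {n : Type*} [Fintype n] [DecidableEq n]
    (F : Matrix n n ℂ) : ℝ :=
  ‖Matrix.toEuclideanCLM (𝕜 := ℂ) F‖

/-!
The absolute value of a trace is at most the rank times the operator norm. Moving `e ⊗ 1` to the
front of the trace leaves `Tr((eF ⊗ G) C)` with `C = P B P`, and decomposing `G = ∑ w wᴴ` gives
`Tr((eF ⊗ w wᴴ) C) = Tr(eF · Vᴴ C V)` where `V x = x ⊗ w`. Here `eF · Vᴴ C V` has rank at most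
`rank e` and `‖V‖² ≤ ‖w‖²`; the numbers `‖w‖²` add up to `Tr G`, and `‖C‖ ≤ ‖B‖` as `‖P‖ ≤ 1`.
-/

open Matrix

open scoped Matrix.Norms.L2Operator

section Trace

variable {𝕜 : Type*} [RCLike 𝕜]

theorem norm_trace_le_finrank_range_mul_norm {E : Type*} [NormedAddCommGroup E]
    [InnerProductSpace 𝕜 E] [FiniteDimensional 𝕜 E] (T : E →L[𝕜] E) :
    ‖LinearMap.trace 𝕜 E T‖ ≤ Module.finrank 𝕜 T.range * ‖T‖ := by
  let b := stdOrthonormalBasis 𝕜 T.range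
  have inner_le (i) : ‖inner 𝕜 (b i : E) (T (b i))‖ ≤ ‖T‖ := by
    have hb : ‖(b i : E)‖ = 1 := b.norm_eq_one i
    calc ‖inner 𝕜 (b i : E) (T (b i))‖ ≤ ‖(b i : E)‖ * ‖T (b i)‖ := norm_inner_le_norm _ _
      _ ≤ ‖T‖ := by simpa [hb] using T.le_opNorm (b i)
  rw [← LinearMap.trace_restrict_eq_of_forall_mem T.range (T : E →ₗ[𝕜] E)
    (LinearMap.mem_range_self _), LinearMap.trace_eq_sum_inner _ b]
  calc _ ≤ ∑ _i, ‖T‖ := norm_sum_le_of_le _ fun i _ ↦ inner_le i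
    _ = Module.finrank 𝕜 T.range * ‖T‖ := by simp

theorem norm_trace_le_rank_mul_norm {n : Type*} [Fintype n] [DecidableEq n] (A : Matrix n n 𝕜) :
    ‖A.trace‖ ≤ A.rank * ‖A‖ := by
  let b := (EuclideanSpace.basisFun n 𝕜).toBasis
  have h := norm_trace_le_finrank_range_mul_norm (toEuclideanCLM (𝕜 := 𝕜) A)
  rwa [coe_toEuclideanCLM_eq_toEuclideanLin, toEuclideanLin_eq_toLin_orthonormal, trace_toLin_eq,
    ← A.rank_eq_finrank_range_toLin b b] at h

end Trace

section TensorRight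

variable {R m p : Type*} [CommSemiring R] [DecidableEq m]

/-- The matrix of the linear map `x ↦ x ⊗ w`, used to compress a matrix on the tensor product to
its first factor. -/
def tensorRight (m : Type*) [DecidableEq m] (w : p → R) : Matrix (m × p) m R :=
  of fun q j ↦ (1 : Matrix m m R) q.1 j * w q.2

variable [StarRing R] [Fintype m]

theorem tensorRight_mul_mul_conjTranspose {n : Type*} [Fintype n] [DecidableEq n] (w : p → R)
    (T : Matrix m n R) :
    tensorRight m w * T * (tensorRight n w)ᴴ = T ⊗ₖ vecMulVec w (star w) := by
  ext ⟨i, a⟩ ⟨j, b⟩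
  simp only [tensorRight, mul_apply, conjTranspose_apply, of_apply, one_apply, ite_mul, one_mul,
    zero_mul, Finset.sum_ite_eq, Finset.mem_univ, if_true, apply_ite star, star_zero, mul_ite,
    mul_zero, kroneckerMap_apply, vecMulVec_apply, Pi.star_apply]
  ring

theorem conjTranspose_tensorRight_mul_self [Fintype p] (w : p → R) :
    (tensorRight m w)ᴴ * tensorRight m w = (w ⬝ᵥ star w) • (1 : Matrix m m R) := by
  ext i j
  simp [tensorRight, mul_apply, one_apply, apply_ite star, Fintype.sum_prod_type,
    dotProduct, mul_comm, eq_comm]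

end TensorRight

section Kronecker

variable {𝕜 m p : Type*} [RCLike 𝕜] [Fintype m] [DecidableEq m] [Fintype p]

theorem norm_tensorRight_sq_le (w : p → 𝕜) :
    ‖tensorRight m w‖ ^ 2 ≤ RCLike.re (w ⬝ᵥ star w) := by
  calc ‖tensorRight m w‖ ^ 2 = ‖w ⬝ᵥ star w‖ * ‖(1 : Matrix m m 𝕜)‖ := by
        rw [sq, ← l2_opNorm_conjTranspose_mul_self, conjTranspose_tensorRight_mul_self, norm_smul]
    _ ≤ ‖w ⬝ᵥ star w‖ :=
        mul_le_of_le_one_right (norm_nonneg _) (IsStarProjection.norm_le _ (.one _))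
    _ = RCLike.re (w ⬝ᵥ star w) := by
        simpa using congrArg RCLike.re (RCLike.norm_of_nonneg' (dotProduct_self_star_nonneg w))

theorem norm_conjTranspose_tensorRight_mul_mul_le [DecidableEq p] (w : p → 𝕜)
    (C : Matrix (m × p) (m × p) 𝕜) :
    ‖(tensorRight m w)ᴴ * C * tensorRight m w‖ ≤ RCLike.re (w ⬝ᵥ star w) * ‖C‖ := by
  calc ‖(tensorRight m w)ᴴ * C * tensorRight m w‖
      ≤ ‖(tensorRight m w)ᴴ‖ * ‖C‖ * ‖tensorRight m w‖ := by
        grw [l2_opNorm_mul, l2_opNorm_mul]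
    _ = ‖tensorRight m w‖ ^ 2 * ‖C‖ := by
        rw [l2_opNorm_conjTranspose]; ring
    _ ≤ RCLike.re (w ⬝ᵥ star w) * ‖C‖ := by grw [norm_tensorRight_sq_le]

theorem norm_trace_kronecker_vecMulVec_mul_le [DecidableEq p] (T : Matrix m m 𝕜) (w : p → 𝕜)
    (C : Matrix (m × p) (m × p) 𝕜) :
    ‖((T ⊗ₖ vecMulVec w (star w)) * C).trace‖
      ≤ T.rank * (RCLike.re (w ⬝ᵥ star w) * ‖C‖ * ‖T‖) := by
  let V := tensorRight m w
  calc ‖((T ⊗ₖ vecMulVec w (star w)) * C).trace‖ = ‖(T * (Vᴴ * C * V)).trace‖ := by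
        rw [← tensorRight_mul_mul_conjTranspose, Matrix.mul_assoc, Matrix.mul_assoc,
          trace_mul_comm, Matrix.mul_assoc]
    _ ≤ (T * (Vᴴ * C * V)).rank * ‖T * (Vᴴ * C * V)‖ := norm_trace_le_rank_mul_norm _
    _ ≤ T.rank * (‖T‖ * (RCLike.re (w ⬝ᵥ star w) * ‖C‖)) := by
        grw [rank_mul_le_left, norm_mul_le, norm_conjTranspose_tensorRight_mul_mul_le]
    _ = T.rank * (RCLike.re (w ⬝ᵥ star w) * ‖C‖ * ‖T‖) := by ring

theorem norm_trace_kronecker_mul_le [DecidableEq p] (T : Matrix m m 𝕜) {G : Matrix p p 𝕜}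
    (hG : G.PosSemidef) (C : Matrix (m × p) (m × p) 𝕜) :
    ‖((T ⊗ₖ G) * C).trace‖ ≤ T.rank * (RCLike.re G.trace * ‖C‖ * ‖T‖) := by
  obtain ⟨r, w, rfl⟩ := posSemidef_iff_eq_sum_vecMulVec.mp hG
  have kronecker_sum : T ⊗ₖ (∑ k, vecMulVec (w k) (star (w k))) =
      ∑ k, T ⊗ₖ vecMulVec (w k) (star (w k)) := by
    ext
    simp [Matrix.sum_apply, Finset.mul_sum]
  calc _ = ‖∑ k, ((T ⊗ₖ vecMulVec (w k) (star (w k))) * C).trace‖ := by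
        rw [kronecker_sum, Finset.sum_mul, trace_sum]
    _ ≤ ∑ k, T.rank * (RCLike.re (w k ⬝ᵥ star (w k)) * ‖C‖ * ‖T‖) :=
        norm_sum_le_of_le _ fun k _ ↦ norm_trace_kronecker_vecMulVec_mul_le T (w k) C
    _ = _ := by simp [trace_sum, trace_vecMulVec, Finset.mul_sum, Finset.sum_mul]

theorem trace_kron_proj_bound_general [DecidableEq p] (F : Matrix m m 𝕜) {G : Matrix p p 𝕜}
    (hG : G.PosSemidef) {P Q : Matrix (m × p) (m × p) 𝕜} (hP : ‖P‖ ≤ 1) (hQ : ‖Q‖ ≤ 1)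
    (B : Matrix (m × p) (m × p) 𝕜) (e : Matrix m m 𝕜) :
    ‖((F ⊗ₖ G) * (P * B * Q) * (e ⊗ₖ (1 : Matrix p p 𝕜))).trace‖
      ≤ e.rank * (RCLike.re G.trace * ‖B‖ * ‖e * F‖) := by
  have re_trace_nonneg : 0 ≤ RCLike.re G.trace := (RCLike.nonneg_iff.mp hG.trace_nonneg).1
  have norm_compression_le : ‖P * B * Q‖ ≤ ‖B‖ :=
    calc ‖P * B * Q‖ ≤ ‖P‖ * ‖B‖ * ‖Q‖ := by grw [norm_mul_le, norm_mul_le]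
      _ ≤ 1 * ‖B‖ * 1 := by gcongr
      _ = ‖B‖ := by ring
  calc _ = ‖(((e * F) ⊗ₖ G) * (P * B * Q)).trace‖ := by
        rw [trace_mul_comm, ← Matrix.mul_assoc, ← mul_kronecker_mul, Matrix.one_mul]
    _ ≤ (e * F).rank * (RCLike.re G.trace * ‖P * B * Q‖ * ‖e * F‖) :=
        norm_trace_kronecker_mul_le _ hG _
    _ ≤ e.rank * (RCLike.re G.trace * ‖B‖ * ‖e * F‖) := by
        grw [rank_mul_le_left e F, norm_compression_le]

end Kronecker

/-- Lemma 7.6 of the paper (matrix form): for positive semidefinite `F ∈ M_m(ℂ)`,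
`G ∈ M_p(ℂ)`, an orthogonal projection `P ∈ M_{mp}(ℂ)`, any `B ∈ M_{mp}(ℂ)` and any
`e ∈ M_m(ℂ)` of rank at most one,
`|Tr((F ⊗ G) · P B P · (e ⊗ I_p))| ≤ Tr(G) · ‖B‖ · ‖eF‖`. -/
theorem trace_kron_proj_bound (m p : ℕ) (hm : 1 ≤ m) (hp : 1 ≤ p)
    (F : Matrix (Fin m) (Fin m) ℂ) (hF : F.PosSemidef)
    (G : Matrix (Fin p) (Fin p) ℂ) (hG : G.PosSemidef)
    (P B : Matrix (Fin m × Fin p) (Fin m × Fin p) ℂ)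
    (hP : P.IsHermitian) (hP2 : P * P = P)
    (e : Matrix (Fin m) (Fin m) ℂ) (he : e.rank ≤ 1) :
    ‖((F ⊗ₖ G) * (P * B * P) * (e ⊗ₖ (1 : Matrix (Fin p) (Fin p) ℂ))).trace‖
      ≤ (G.trace).re * matOpNorm B * matOpNorm (e * F) := by
  have norm_P_le : ‖P‖ ≤ 1 := IsStarProjection.norm_le P ⟨hP2, hP⟩
  have re_trace_nonneg : 0 ≤ RCLike.re G.trace := (RCLike.nonneg_iff.mp hG.trace_nonneg).1
  exact (trace_kron_proj_bound_general F hG norm_P_le norm_P_le B e).trans <|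
    mul_le_of_le_one_left (by positivity) (by exact_mod_cast he)
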